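/- Let ρ : ℝ^d → ℝ be a C² function with ρ_min ≤ ρ ≤ R and |∇ρ| ≤ K on ℝ^d, where ρ_min > 0, and let v : ℝ^d → ℝ^d be a bounded measurable vector field. Fix x ∈ ℝ^d, h ∈ (0,1], ℓ₀ > 0 and constants A, B > 0, and suppose that for every ℓ ∈ (0, ℓ₀]: δv(ℓ;x) ≤ A ℓ^h and δρ(ℓ;x) ≤ B ℓ. Then there exists a constant C, depending only on G, d, ħ, m, A, B, K, ρ_min, h and ℓ₀, such that the quantum-stress–strain satisfies |Σ̄_ℓ(x) : ∇v̄_ℓ(x)| ≤ C ℓ^{h−2} for all ℓ ∈ (0, ℓ₀], where A : B is the Frobenius inner product of matrices. -/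

import Mathlib

/-!
The proof moves every derivative that cannot be controlled onto the kernel `G_ℓ`, each such move
costing one factor `ℓ⁻¹`, because `∫ |∂ᵢG_ℓ| = ℓ⁻¹ ∫ |∂ᵢG|` (`integral_abs_fderiv_resc`).

* Strain: replacing `v` by `v - v(x)` changes `v̄_ℓ` only by a constant, so
  `∂ᵢ v̄_ℓ,ⱼ(x) = -∫ ∂ᵢG_ℓ(r) δvⱼ(r;x) dr`. Only `|r| < ℓ` contributes, where `|δv| ≤ A ℓ^h`, so
  this is at most a constant times `ℓ^{h-1}` (`abs_gradMat_cg_le`).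
* Stress: one integration by parts gives `cg(Δρ) = -∑ₖ ∫ ∂ₖG_ℓ ∂ₖρ`, which is `O(K/ℓ)`, while
  `|∇√ρ| = |∇ρ| / (2√ρ) ≤ K / (2√ρ_min)` bounds the remaining term by a constant, which is
  `O(1/ℓ)` since `ℓ ≤ ℓ₀` (`abs_cgStress_le`).

Multiplying the two and summing over the `d²` entries gives `O(ℓ^{h-2})`.
-/

open MeasureTheory Metric
open scoped RealInnerProductSpace ENNReal

noncomputable section

abbrev Euc (d : ℕ) := EuclideanSpace ℝ (Fin d)

namespace QT

variable {d : ℕ}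

/-- `G` is a mollifier: smooth, nonnegative, supported in the open unit ball, integral one. -/
structure IsMollifier {d : ℕ} (G : Euc d → ℝ) : Prop where
  smooth : ContDiff ℝ (⊤ : ℕ∞) G
  nonneg : ∀ r, 0 ≤ G r
  supp : tsupport G ⊆ ball (0 : Euc d) 1
  integral_one : ∫ r, G r = 1

/-- The rescaled mollifier `G_ℓ(r) = ℓ^{-d} G(r/ℓ)`. -/
def resc (G : Euc d → ℝ) (ℓ : ℝ) (r : Euc d) : ℝ := (ℓ ^ d)⁻¹ * G (ℓ⁻¹ • r)

/-- Coarse-grained field `ā_ℓ(x) = ∫ G_ℓ(r) a(x+r) dr`. -/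
def cg {E : Type*} [NormedAddCommGroup E] [NormedSpace ℝ E]
    (G : Euc d → ℝ) (ℓ : ℝ) (a : Euc d → E) (x : Euc d) : E :=
  ∫ r, resc G ℓ r • a (x + r)

/-- Increment `δa(r;x) = a(x+r) - a(x)`. -/
def incr {E : Type*} [NormedAddCommGroup E] (a : Euc d → E) (r x : Euc d) : E :=
  a (x + r) - a x

/-- `δa(ℓ;x) = sup_{|r|<ℓ} |δa(r;x)|`. -/
def supIncr {E : Type*} [NormedAddCommGroup E] (a : Euc d → E) (ℓ : ℝ) (x : Euc d) : ℝ :=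
  ⨆ r ∈ ball (0 : Euc d) ℓ, ‖incr a r x‖

/-- Second-order coarse-graining cumulant `τ̄_ℓ(f,g)`. -/
def tau2 (G : Euc d → ℝ) (ℓ : ℝ) (f g : Euc d → ℝ) (x : Euc d) : ℝ :=
  cg G ℓ (fun y => f y * g y) x - cg G ℓ f x * cg G ℓ g x

/-- `τ̄_ℓ(ρ, v)` for a scalar density and a vector field. -/
def tauV (G : Euc d → ℝ) (ℓ : ℝ) (ρ : Euc d → ℝ) (v : Euc d → Euc d) (x : Euc d) : Euc d :=
  cg G ℓ (fun y => ρ y • v y) x - cg G ℓ ρ x • cg G ℓ v x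

/-- `i`-th standard basis vector. -/
def e (d : ℕ) (i : Fin d) : Euc d := EuclideanSpace.single i (1 : ℝ)

/-- Partial derivative `∂_i f(x)`. -/
def pd (i : Fin d) (f : Euc d → ℝ) (x : Euc d) : ℝ := fderiv ℝ f x (e d i)

/-- Laplacian. -/
def lap (f : Euc d → ℝ) (x : Euc d) : ℝ := ∑ i, pd i (fun y => pd i f y) x

/-- Gradient matrix `(∇v)_{ij} = ∂_i v_j`. -/
def gradMat (v : Euc d → Euc d) (x : Euc d) : Matrix (Fin d) (Fin d) ℝ :=
  Matrix.of fun i j => pd i (fun y => v y j) x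

/-- Frobenius norm of a matrix. -/
def frobNorm (A : Matrix (Fin d) (Fin d) ℝ) : ℝ := Real.sqrt (∑ i, ∑ j, A i j ^ 2)

/-- Frobenius inner product `A : B`. -/
def frobInner (A B : Matrix (Fin d) (Fin d) ℝ) : ℝ := ∑ i, ∑ j, A i j * B i j

/-- Favre-averaged velocity `ṽ_ℓ = \overline{(ρv)}_ℓ/ρ̄_ℓ` where `ρ̄_ℓ > 0`, `0` otherwise. -/
def favre (G : Euc d → ℝ) (ℓ : ℝ) (ρ : Euc d → ℝ) (v : Euc d → Euc d) (x : Euc d) : Euc d :=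
  if 0 < cg G ℓ ρ x then (cg G ℓ ρ x)⁻¹ • cg G ℓ (fun y => ρ y • v y) x else 0

/-- Favre stress `τ̃_ℓ(v,v) = \overline{(ρ v⊗v)}_ℓ/ρ̄_ℓ − ṽ_ℓ ⊗ ṽ_ℓ`. -/
def favreStress (G : Euc d → ℝ) (ℓ : ℝ) (ρ : Euc d → ℝ) (v : Euc d → Euc d) (x : Euc d) :
    Matrix (Fin d) (Fin d) ℝ :=
  Matrix.of fun i j =>
    (cg G ℓ ρ x)⁻¹ * cg G ℓ (fun y => ρ y * (v y i * v y j)) x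
      - favre G ℓ ρ v x i * favre G ℓ ρ v x j

/-- Deformation work `Π_ℓ = −ρ̄_ℓ ∇ṽ_ℓ : τ̃_ℓ(v,v)`. -/
def deformWork (G : Euc d → ℝ) (ℓ : ℝ) (ρ : Euc d → ℝ) (v : Euc d → Euc d) (x : Euc d) : ℝ :=
  -(cg G ℓ ρ x * frobInner (gradMat (favre G ℓ ρ v) x) (favreStress G ℓ ρ v x))

/-- The periodic box `[0,𝓛]^d`. -/
def box (d : ℕ) (L : ℝ) : Set (Euc d) := {x | ∀ i, x i ∈ Set.Icc (0 : ℝ) L}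

/-- Normalized measure on the periodic box, so that `eLpNorm · p (boxMeasure d 𝓛)`
is the normalized `L^p` norm `(𝓛^{-d}∫_{[0,𝓛]^d}|f|^p)^{1/p}` (ess-sup for `p = ∞`). -/
def boxMeasure (d : ℕ) (L : ℝ) : Measure (Euc d) :=
  (ENNReal.ofReal (L ^ d))⁻¹ • (volume.restrict (box d L))

/-- `𝓛`-periodicity in each coordinate. -/
def PeriodicF {E : Type*} (L : ℝ) (f : Euc d → E) : Prop :=
  ∀ (x : Euc d) (i : Fin d), f (x + EuclideanSpace.single i L) = f x

/-- Quantum stress `Σ = (ħ²/4m²)(Δρ)I − (ħ²/m²)∇√ρ ⊗ ∇√ρ`. -/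
def qStress (hb m : ℝ) (ρ : Euc d → ℝ) (x : Euc d) : Matrix (Fin d) (Fin d) ℝ :=
  Matrix.of fun i j =>
    (hb ^ 2 / (4 * m ^ 2)) * lap ρ x * (if i = j then (1 : ℝ) else 0)
      - (hb ^ 2 / m ^ 2) * (gradient (fun y => Real.sqrt (ρ y)) x i
          * gradient (fun y => Real.sqrt (ρ y)) x j)

/-- Coarse-grained quantum stress `Σ̄_ℓ`. -/
def cgStress (G : Euc d → ℝ) (ℓ hb m : ℝ) (ρ : Euc d → ℝ) (x : Euc d) :
    Matrix (Fin d) (Fin d) ℝ :=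
  Matrix.of fun i j => cg G ℓ (fun z => qStress hb m ρ z i j) x

/-- Row-wise divergence of the coarse-grained quantum stress, `(∇·Σ̄_ℓ)_j = ∑_i ∂_i (Σ̄_ℓ)_{ij}`. -/
def divCgStress (G : Euc d → ℝ) (ℓ hb m : ℝ) (ρ : Euc d → ℝ) (x : Euc d) : Euc d :=
  (EuclideanSpace.equiv (Fin d) ℝ).symm
    (fun j => ∑ i, pd i (fun y => cgStress G ℓ hb m ρ y i j) x)

/-- Quantum baropycnal work `Λ^{(Σ)}_ℓ = −(1/ρ̄_ℓ)(∇·Σ̄_ℓ)·τ̄_ℓ(ρ,v)`. -/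
def qBaroWork (G : Euc d → ℝ) (ℓ hb m : ℝ) (ρ : Euc d → ℝ) (v : Euc d → Euc d) (x : Euc d) : ℝ :=
  -((cg G ℓ ρ x)⁻¹ * ⟪divCgStress G ℓ hb m ρ x, tauV G ℓ ρ v x⟫)

end QT

namespace QT

/-! ### The rescaled kernel -/

variable {d : ℕ} {G : Euc d → ℝ} {ℓ : ℝ}

lemma norm_e (i : Fin d) : ‖e d i‖ = 1 := by
  simp [e]

lemma IsMollifier.hasCompactSupport (hG : IsMollifier G) : HasCompactSupport G :=
  HasCompactSupport.of_support_subset_isCompact (isCompact_closedBall (0 : Euc d) 1)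
    ((subset_tsupport G).trans (hG.supp.trans ball_subset_closedBall))

lemma IsMollifier.contDiff_resc (hG : IsMollifier G) : ContDiff ℝ 1 (resc G ℓ) := by
  have h1 : ContDiff ℝ 1 G := hG.smooth.of_le (by exact_mod_cast le_top)
  unfold resc
  fun_prop

lemma IsMollifier.hasCompactSupport_resc (hG : IsMollifier G) (hℓ : 0 < ℓ) :
    HasCompactSupport (resc G ℓ) :=
  (hG.hasCompactSupport.comp_smul (inv_ne_zero hℓ.ne')).mul_left

lemma IsMollifier.resc_nonneg (hG : IsMollifier G) (hℓ : 0 < ℓ) (r : Euc d) :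
    0 ≤ resc G ℓ r :=
  mul_nonneg (by positivity) (hG.nonneg _)

lemma IsMollifier.integral_resc (hG : IsMollifier G) (hℓ : 0 < ℓ) :
    ∫ r, resc G ℓ r = 1 := by
  unfold resc
  rw [integral_const_mul, Measure.integral_comp_inv_smul_of_nonneg _ _ hℓ.le, hG.integral_one]
  simp [hℓ.ne']

lemma fderiv_resc (hG : IsMollifier G) (r u : Euc d) :
    fderiv ℝ (resc G ℓ) r u = (ℓ ^ d)⁻¹ * (ℓ⁻¹ * fderiv ℝ G (ℓ⁻¹ • r) u) := by
  have h1 : ContDiff ℝ 1 G := hG.smooth.of_le (by exact_mod_cast le_top)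
  have hd : Differentiable ℝ G := h1.differentiable one_ne_zero
  have h2 : HasFDerivAt (resc G ℓ) ((ℓ ^ d)⁻¹ • ((fderiv ℝ G (ℓ⁻¹ • r)).comp
      (ℓ⁻¹ • ContinuousLinearMap.id ℝ (Euc d)))) r :=
    (((hd (ℓ⁻¹ • r)).hasFDerivAt).comp r ((hasFDerivAt_id r).const_smul ℓ⁻¹)).const_mul _
  rw [h2.fderiv]
  simp

/-- Differentiating the rescaled kernel costs exactly one power of `ℓ` in `L¹`. -/
lemma integral_abs_fderiv_resc (hG : IsMollifier G) (hℓ : 0 < ℓ) (u : Euc d) :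
    ∫ r, |fderiv ℝ (resc G ℓ) r u| = ℓ⁻¹ * ∫ r, |fderiv ℝ G r u| := by
  simp_rw [fderiv_resc hG, abs_mul, abs_of_pos (inv_pos.2 hℓ),
    abs_of_pos (inv_pos.2 (pow_pos hℓ d))]
  rw [integral_const_mul, integral_const_mul,
    Measure.integral_comp_inv_smul_of_nonneg _ (fun r => |fderiv ℝ G r u|) hℓ.le]
  simp only [finrank_euclideanSpace, Fintype.card_fin, smul_eq_mul]
  field_simp

lemma fderiv_resc_eq_zero (hG : IsMollifier G) (hℓ : 0 < ℓ) {r : Euc d}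
    (hr : r ∉ ball (0 : Euc d) ℓ) (u : Euc d) : fderiv ℝ (resc G ℓ) r u = 0 := by
  rw [fderiv_resc hG]
  have : ℓ⁻¹ • r ∉ tsupport G := by
    intro hmem
    have := hG.supp hmem
    rw [mem_ball_zero_iff, norm_smul, norm_inv, Real.norm_of_nonneg hℓ.le,
      inv_mul_lt_iff₀ hℓ, mul_one] at this
    exact hr (mem_ball_zero_iff.2 this)
  rw [fderiv_of_notMem_tsupport ℝ this]
  simp

/-- The constant `∑ᵢ ∫ |∂ᵢG|`, through which all estimates depend on the mollifier. -/
def kerConst (G : Euc d → ℝ) : ℝ := ∑ i, ∫ r, |fderiv ℝ G r (e d i)|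

lemma kerConst_nonneg : 0 ≤ kerConst G :=
  Finset.sum_nonneg fun _ _ => integral_nonneg fun _ => abs_nonneg _

lemma continuous_fderiv_resc (hG : IsMollifier G) (u : Euc d) :
    Continuous fun r => fderiv ℝ (resc G ℓ) r u :=
  (hG.contDiff_resc.continuous_fderiv one_ne_zero).clm_apply continuous_const

lemma hasCompactSupport_fderiv_resc (hG : IsMollifier G) (hℓ : 0 < ℓ) (u : Euc d) :
    HasCompactSupport fun r => fderiv ℝ (resc G ℓ) r u :=
  (hG.hasCompactSupport_resc hℓ).fderiv_apply ℝ u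

/-- A function that is at most `D` on the ball of radius `ℓ` contributes at most `D/ℓ`, up to a
constant, when integrated against a partial derivative of the kernel. -/
lemma abs_integral_fderiv_resc_mul_le (hG : IsMollifier G) (hℓ : 0 < ℓ) (i : Fin d)
    {w : Euc d → ℝ} {D : ℝ} (hw : ∀ r ∈ ball (0 : Euc d) ℓ, |w r| ≤ D) :
    |∫ r, fderiv ℝ (resc G ℓ) r (e d i) * w r| ≤
      D * (ℓ⁻¹ * ∫ r, |fderiv ℝ G r (e d i)|) := by
  rw [← integral_abs_fderiv_resc hG hℓ, ← integral_const_mul]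
  have hint : Integrable fun r => fderiv ℝ (resc G ℓ) r (e d i) :=
    (continuous_fderiv_resc hG _).integrable_of_hasCompactSupport
      (hasCompactSupport_fderiv_resc hG hℓ _)
  rw [← Real.norm_eq_abs (∫ r, _ * w r)]
  refine norm_integral_le_of_norm_le (hint.abs.const_mul D) (ae_of_all _ fun r => ?_)
  rw [Real.norm_eq_abs, abs_mul, mul_comm]
  by_cases hr : r ∈ ball (0 : Euc d) ℓ
  · exact mul_le_mul_of_nonneg_right (hw r hr) (abs_nonneg _)
  · simp [fderiv_resc_eq_zero hG hℓ hr]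

lemma integrable_resc_mul (hG : IsMollifier G) (hℓ : 0 < ℓ) {w : Euc d → ℝ}
    (hw : Continuous w) (x : Euc d) : Integrable fun r => resc G ℓ r * w (x + r) :=
  (hG.contDiff_resc.continuous.mul (by fun_prop)).integrable_of_hasCompactSupport
    ((hG.hasCompactSupport_resc hℓ).mul_right)

/-! ### Gradient of the coarse-grained velocity -/

/-- For a bounded measurable `w`, the derivative of `w̄_ℓ` falls on the kernel. -/
lemma pd_cg (hG : IsMollifier G) (hℓ : 0 < ℓ) {w : Euc d → ℝ} (hw : Measurable w)
    {D : ℝ} (hD : ∀ y, ‖w y‖ ≤ D) (i : Fin d) (x : Euc d) :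
    pd i (cg G ℓ w) x = -∫ r, fderiv ℝ (resc G ℓ) r (e d i) * w (x + r) := by
  -- `w̄_ℓ` is the convolution of `w` with the reflected kernel `g`.
  set g : Euc d → ℝ := fun u => resc G ℓ (-u) with hg
  have hgc : HasCompactSupport g :=
    (hG.hasCompactSupport_resc hℓ).comp_homeomorph (Homeomorph.neg (Euc d))
  have hg1 : ContDiff ℝ 1 g := hG.contDiff_resc.comp contDiff_neg
  have hfg : ∀ u, fderiv ℝ g u (e d i) = -fderiv ℝ (resc G ℓ) (-u) (e d i) := by
    intro u
    have := ((hG.contDiff_resc (ℓ := ℓ)).differentiable one_ne_zero (-u)).hasFDerivAt.comp u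
      (hasFDerivAt_id u).neg
    rw [show g = resc G ℓ ∘ Neg.neg from rfl, this.fderiv]
    simp
  have hloc : LocallyIntegrable w (volume : Measure (Euc d)) := by
    refine (MeasureTheory.locallyIntegrable_const D).mono hw.aestronglyMeasurable
      (ae_of_all _ fun y => (hD y).trans (le_abs_self D))
  have hconv : cg G ℓ w = convolution w g (ContinuousLinearMap.lsmul ℝ ℝ) volume := by
    ext y
    rw [convolution_lsmul, cg, ← integral_add_left_eq_self (fun t => w t • g (y - t)) y]
    refine integral_congr_ae (ae_of_all _ fun r => ?_)
    simp [hg, mul_comm]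
  have hder := hgc.hasFDerivAt_convolution_right (ContinuousLinearMap.lsmul ℝ ℝ) hloc hg1 x
  have hex := (hgc.fderiv ℝ).convolutionExists_right
    ((ContinuousLinearMap.lsmul ℝ ℝ).precompR (Euc d)) hloc
      (hg1.continuous_fderiv one_ne_zero) x
  rw [pd, hconv, hder.fderiv, convolution_def,
    ContinuousLinearMap.integral_apply hex.integrable, ← integral_neg,
    ← integral_add_left_eq_self _ x]
  refine integral_congr_ae (ae_of_all _ fun r => ?_)
  simp [ContinuousLinearMap.precompR_apply, hfg, mul_comm]

/-- The supremum defining `supIncr` is finite for a bounded field, hence a genuine bound. -/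
lemma norm_incr_le_supIncr {E : Type*} [NormedAddCommGroup E] {a : Euc d → E} {D : ℝ}
    (hD : ∀ y, ‖a y‖ ≤ D) {x r : Euc d} (hr : r ∈ ball (0 : Euc d) ℓ) :
    ‖incr a r x‖ ≤ supIncr a ℓ x := by
  have hb : ∀ s : Euc d, ‖incr a s x‖ ≤ D + D := fun s =>
    (norm_sub_le _ _).trans (add_le_add (hD _) (hD _))
  have hD0 : 0 ≤ D + D := (norm_nonneg _).trans (hb 0)
  have hbdd : BddAbove (Set.range fun s => ⨆ _ : s ∈ ball (0 : Euc d) ℓ, ‖incr a s x‖) := by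
    refine ⟨D + D, ?_⟩
    rintro _ ⟨s, rfl⟩
    exact Real.iSup_le (fun _ => hb s) hD0
  refine le_trans ?_ (le_ciSup hbdd r)
  have : Nonempty (r ∈ ball (0 : Euc d) ℓ) := ⟨hr⟩
  rw [ciSup_const]

lemma abs_gradMat_cg_le (hG : IsMollifier G) (hℓ : 0 < ℓ) {v : Euc d → Euc d}
    (hv : Measurable v) {Cv : ℝ} (hCv : ∀ y, ‖v y‖ ≤ Cv) {x : Euc d} {D : ℝ}
    (hD : supIncr v ℓ x ≤ D) (i j : Fin d) :
    |gradMat (cg G ℓ v) x i j| ≤ D * (ℓ⁻¹ * kerConst G) := by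
  have hφ := hG.contDiff_resc (ℓ := ℓ)
  have hφi : Integrable (resc G ℓ) :=
    hφ.continuous.integrable_of_hasCompactSupport (hG.hasCompactSupport_resc hℓ)
  have hvint : ∀ y, Integrable fun r => resc G ℓ r • v (y + r) := fun y =>
    hφi.smul_bdd Cv (hv.comp (measurable_const_add y)).aestronglyMeasurable
      (ae_of_all _ fun r => hCv _)
  have hcoord : ∀ (u : Euc d), ‖u j‖ ≤ ‖u‖ := fun u => PiLp.norm_apply_le u j
  have hvj : Measurable fun y => v y j := by fun_prop
  set w : Euc d → ℝ := fun y => v y j - v x j with hw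
  have hwb : ∀ y, ‖w y‖ ≤ Cv + Cv := fun y =>
    (norm_sub_le _ _).trans (add_le_add ((hcoord _).trans (hCv _)) ((hcoord _).trans (hCv _)))
  -- Subtracting the constant `v(x)` changes `v̄_ℓ` by a constant, as the kernel has mass one.
  have hcg : (fun y => cg G ℓ v y j) = fun y => cg G ℓ w y + v x j := by
    ext y
    have h1 : cg G ℓ v y j = ∫ r, resc G ℓ r * v (y + r) j := by
      have := (EuclideanSpace.proj (𝕜 := ℝ) j : Euc d →L[ℝ] ℝ).integral_comp_comm (hvint y)
      simpa [cg] using this.symm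
    have h2 : Integrable fun r => resc G ℓ r * v (y + r) j := by
      have := (EuclideanSpace.proj (𝕜 := ℝ) j : Euc d →L[ℝ] ℝ).integrable_comp (hvint y)
      simpa using this
    rw [h1]
    simp only [cg, hw, smul_eq_mul, mul_sub]
    rw [integral_sub h2 (hφi.mul_const _), integral_mul_const, hG.integral_resc hℓ]
    ring
  have hpd : gradMat (cg G ℓ v) x i j = pd i (cg G ℓ w) x := by
    change pd i (fun y => cg G ℓ v y j) x = _
    rw [hcg, pd, pd, fderiv_add_const]
  have hD0 : 0 ≤ D := by
    have := norm_incr_le_supIncr (x := x) hCv (mem_ball_self (x := (0 : Euc d)) hℓ)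
    exact (norm_nonneg _).trans (this.trans hD)
  rw [hpd, pd_cg hG hℓ (hvj.sub_const _) hwb, abs_neg]
  refine (abs_integral_fderiv_resc_mul_le hG hℓ i (w := fun r => w (x + r)) (D := D)
    fun r hr => ?_).trans ?_
  · exact (hcoord (incr v r x)).trans ((norm_incr_le_supIncr hCv hr).trans hD)
  · gcongr
    exact Finset.single_le_sum (f := fun i => ∫ r, |fderiv ℝ G r (e d i)|)
      (fun _ _ => integral_nonneg fun _ => abs_nonneg _) (Finset.mem_univ i)

/-! ### Coarse-grained quantum stress -/

lemma norm_gradient_eq {f : Euc d → ℝ} (y : Euc d) : ‖gradient f y‖ = ‖fderiv ℝ f y‖ := by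
  simp [gradient]

lemma abs_cg_pd_le (hG : IsMollifier G) (hℓ : 0 < ℓ) {f : Euc d → ℝ} (hf : ContDiff ℝ 1 f)
    {K : ℝ} (hK : ∀ y, |f y| ≤ K) (i : Fin d) (x : Euc d) :
    |cg G ℓ (pd i f) x| ≤ K * (ℓ⁻¹ * ∫ r, |fderiv ℝ G r (e d i)|) := by
  have hφ := hG.contDiff_resc (ℓ := ℓ)
  set g : Euc d → ℝ := fun r => f (x + r) with hg
  have hg1 : ContDiff ℝ 1 g := hf.comp (contDiff_const.add contDiff_id)
  have hgd : ∀ r, fderiv ℝ g r = fderiv ℝ f (x + r) := fun r => fderiv_comp_add_left x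
  have hgc : Continuous fun r => fderiv ℝ g r (e d i) :=
    (hg1.continuous_fderiv one_ne_zero).clm_apply continuous_const
  have hsupp := hG.hasCompactSupport_resc hℓ
  have key := integral_mul_fderiv_eq_neg_fderiv_mul_of_integrable (μ := volume)
    (f := resc G ℓ) (g := g) (v := e d i)
    (((continuous_fderiv_resc hG _).mul hg1.continuous).integrable_of_hasCompactSupport
      (hasCompactSupport_fderiv_resc hG hℓ _).mul_right)
    ((hφ.continuous.mul hgc).integrable_of_hasCompactSupport hsupp.mul_right)
    ((hφ.continuous.mul hg1.continuous).integrable_of_hasCompactSupport hsupp.mul_right)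
    (fun r _ => hφ.differentiable one_ne_zero r)
    (fun r _ => hg1.differentiable one_ne_zero r)
  have h1 : cg G ℓ (pd i f) x = ∫ r, resc G ℓ r * fderiv ℝ g r (e d i) := by
    simp [cg, pd, hgd]
  rw [h1, key, abs_neg]
  exact abs_integral_fderiv_resc_mul_le hG hℓ i fun r _ => hK _

lemma abs_cg_le (hG : IsMollifier G) (hℓ : 0 < ℓ) {w : Euc d → ℝ} {D : ℝ}
    (hD : ∀ y, |w y| ≤ D) (x : Euc d) : |cg G ℓ w x| ≤ D := by
  have hφi : Integrable (resc G ℓ) :=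
    hG.contDiff_resc.continuous.integrable_of_hasCompactSupport (hG.hasCompactSupport_resc hℓ)
  calc |cg G ℓ w x| ≤ ∫ r, resc G ℓ r * D := by
        rw [cg, ← Real.norm_eq_abs]
        refine norm_integral_le_of_norm_le (hφi.mul_const D) (ae_of_all _ fun r => ?_)
        rw [smul_eq_mul, norm_mul, Real.norm_of_nonneg (hG.resc_nonneg hℓ r)]
        exact mul_le_mul_of_nonneg_left (hD _) (hG.resc_nonneg hℓ r)
    _ = D := by rw [integral_mul_const, hG.integral_resc hℓ, one_mul]

variable {ρ : Euc d → ℝ} {K ρmin : ℝ}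

lemma norm_gradient_sqrt_le (hρ : ContDiff ℝ 2 ρ) (hρmin : 0 < ρmin)
    (hmin : ∀ y, ρmin ≤ ρ y) (hK : ∀ y, ‖gradient ρ y‖ ≤ K) (y : Euc d) :
    ‖gradient (fun z => Real.sqrt (ρ z)) y‖ ≤ K / (2 * Real.sqrt ρmin) := by
  have hpos : 0 < ρ y := hρmin.trans_le (hmin y)
  have hK0 : 0 ≤ K := (norm_nonneg _).trans (hK y)
  have hs : 0 < Real.sqrt ρmin := Real.sqrt_pos.2 hρmin
  rw [norm_gradient_eq, fderiv_sqrt (hρ.differentiable two_ne_zero y) hpos.ne', norm_smul,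
    ← norm_gradient_eq, Real.norm_of_nonneg (by positivity), one_div_mul_eq_div]
  gcongr
  · exact hK y
  · exact hmin y

lemma abs_cg_lap_le (hG : IsMollifier G) (hℓ : 0 < ℓ) (hρ : ContDiff ℝ 2 ρ)
    (hK : ∀ y, ‖gradient ρ y‖ ≤ K) (x : Euc d) :
    |cg G ℓ (lap ρ) x| ≤ K * (ℓ⁻¹ * kerConst G) := by
  have hpd : ∀ i : Fin d, ContDiff ℝ 1 (pd i ρ) := fun i =>
    (hρ.fderiv_right (m := 1) (by norm_num)).clm_apply contDiff_const
  have hpdK : ∀ (i : Fin d) y, |pd i ρ y| ≤ K := fun i y => by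
    have := (fderiv ℝ ρ y).le_opNorm (e d i)
    rw [norm_e, mul_one, ← norm_gradient_eq] at this
    exact this.trans (hK y)
  have hsum : cg G ℓ (lap ρ) x = ∑ i, cg G ℓ (pd i (pd i ρ)) x := by
    simp only [cg, lap, smul_eq_mul, Finset.mul_sum]
    refine integral_finsetSum _ fun i _ => integrable_resc_mul hG hℓ ?_ x
    exact ((hpd i).continuous_fderiv one_ne_zero).clm_apply continuous_const
  rw [hsum, kerConst, Finset.mul_sum, Finset.mul_sum]
  exact (Finset.abs_sum_le_sum_abs _ _).trans
    (Finset.sum_le_sum fun i _ => abs_cg_pd_le hG hℓ (hpd i) (hpdK i) i x)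

lemma continuous_lap (hρ : ContDiff ℝ 2 ρ) : Continuous (lap ρ) := by
  unfold lap
  refine continuous_finsetSum _ fun i _ => ?_
  have hpd : ContDiff ℝ 1 (pd i ρ) :=
    (hρ.fderiv_right (m := 1) (by norm_num)).clm_apply contDiff_const
  exact (hpd.continuous_fderiv one_ne_zero).clm_apply continuous_const

lemma continuous_gradient_sqrt (hρ : ContDiff ℝ 2 ρ) (hpos : ∀ y, 0 < ρ y) :
    Continuous (gradient fun z => Real.sqrt (ρ z)) :=
  (InnerProductSpace.toDual ℝ (Euc d)).symm.continuous.comp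
    ((hρ.sqrt fun y => (hpos y).ne').continuous_fderiv two_ne_zero)

lemma abs_cgStress_le (hG : IsMollifier G) (hℓ : 0 < ℓ) (hb m : ℝ) (hρ : ContDiff ℝ 2 ρ)
    (hρmin : 0 < ρmin) (hmin : ∀ y, ρmin ≤ ρ y) (hK : ∀ y, ‖gradient ρ y‖ ≤ K)
    (x : Euc d) (i j : Fin d) :
    |cgStress G ℓ hb m ρ x i j| ≤
      hb ^ 2 / (4 * m ^ 2) * (K * (ℓ⁻¹ * kerConst G))
        + hb ^ 2 / m ^ 2 * (K / (2 * Real.sqrt ρmin)) ^ 2 := by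
  set q : Euc d → Euc d := gradient fun z => Real.sqrt (ρ z) with hq
  set δ : ℝ := if i = j then 1 else 0 with hδ
  have hqc : Continuous q := continuous_gradient_sqrt hρ fun y => hρmin.trans_le (hmin y)
  have hprod : Continuous fun z => q z i * q z j := by fun_prop
  have hδ1 : |δ| ≤ 1 := by
    rw [hδ]; split_ifs <;> simp
  have hsplit : cgStress G ℓ hb m ρ x i j =
      hb ^ 2 / (4 * m ^ 2) * δ * cg G ℓ (lap ρ) x
        - hb ^ 2 / m ^ 2 * cg G ℓ (fun z => q z i * q z j) x := by
    simp only [cgStress, Matrix.of_apply, cg, smul_eq_mul]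
    rw [← integral_const_mul, ← integral_const_mul, ← integral_sub
      ((integrable_resc_mul hG hℓ (continuous_lap hρ) x).const_mul _)
      ((integrable_resc_mul hG hℓ hprod x).const_mul _)]
    refine integral_congr_ae (ae_of_all _ fun r => ?_)
    simp only [qStress, Matrix.of_apply, ← hq, ← hδ]
    ring
  have hlap := abs_cg_lap_le hG hℓ hρ hK x
  have hgrad : |cg G ℓ (fun z => q z i * q z j) x| ≤ (K / (2 * Real.sqrt ρmin)) ^ 2 := by
    refine abs_cg_le hG hℓ (fun y => ?_) x
    have hy := norm_gradient_sqrt_le hρ hρmin hmin hK y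
    rw [abs_mul, sq]
    exact mul_le_mul ((PiLp.norm_apply_le (q y) i).trans hy)
      ((PiLp.norm_apply_le (q y) j).trans hy) (abs_nonneg _) ((norm_nonneg _).trans hy)
  rw [hsplit]
  refine (abs_sub _ _).trans (add_le_add ?_ ?_)
  · rw [abs_mul, abs_mul, abs_of_nonneg (by positivity : 0 ≤ hb ^ 2 / (4 * m ^ 2))]
    refine mul_le_mul ?_ hlap (abs_nonneg _) (by positivity)
    exact mul_le_of_le_one_right (by positivity) hδ1
  · rw [abs_mul, abs_of_nonneg (by positivity : 0 ≤ hb ^ 2 / m ^ 2)]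
    gcongr

lemma abs_frobInner_le {S T : Matrix (Fin d) (Fin d) ℝ} {a b : ℝ}
    (hS : ∀ i j, |S i j| ≤ a) (hT : ∀ i j, |T i j| ≤ b) :
    |frobInner S T| ≤ d * (d * (a * b)) := by
  have hterm : ∀ i j, |S i j * T i j| ≤ a * b := fun i j => by
    rw [abs_mul]
    exact mul_le_mul (hS i j) (hT i j) (abs_nonneg _) ((abs_nonneg _).trans (hS i j))
  have hrow : ∀ i, |∑ j, S i j * T i j| ≤ d * (a * b) := fun i => by
    refine (Finset.abs_sum_le_sum_abs _ _).trans
      ((Finset.sum_le_card_nsmul _ _ _ fun j _ => hterm i j).trans_eq ?_)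
    simp
  refine (Finset.abs_sum_le_sum_abs _ _).trans
    ((Finset.sum_le_card_nsmul _ _ _ fun i _ => hrow i).trans_eq ?_)
  simp

end QT

open QT in
/-- quantum-stress–strain bound `|Σ̄_ℓ(x) : ∇v̄_ℓ(x)| ≤ C ℓ^{h−2}` for
`ℓ ∈ (0,ℓ₀]`, with `C` depending only on `G, d, ħ, m, A, B, K, ρ_min, h, ℓ₀`. -/
theorem cgStress_strain_le {d : ℕ} (hd : 1 ≤ d)
    (G : Euc d → ℝ) (hG : IsMollifier G)
    (hb m A B K ρmin h ℓ₀ : ℝ) (hhb : 0 < hb) (hm : 0 < m)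
    (hA : 0 < A) (hB : 0 < B) (hK : 0 < K) (hρmin : 0 < ρmin)
    (hh : h ∈ Set.Ioc (0 : ℝ) 1) (hℓ₀ : 0 < ℓ₀) :
    ∃ C > 0, ∀ (ρ : Euc d → ℝ) (v : Euc d → Euc d) (R Cv : ℝ) (x : Euc d),
      ContDiff ℝ 2 ρ → (∀ y, ρmin ≤ ρ y) → (∀ y, ρ y ≤ R) →
      (∀ y, ‖gradient ρ y‖ ≤ K) →
      Measurable v → (∀ y, ‖v y‖ ≤ Cv) →
      (∀ ℓ ∈ Set.Ioc (0 : ℝ) ℓ₀,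
        supIncr v ℓ x ≤ A * ℓ ^ h ∧ supIncr ρ ℓ x ≤ B * ℓ) →
      ∀ ℓ ∈ Set.Ioc (0 : ℝ) ℓ₀,
        |frobInner (cgStress G ℓ hb m ρ x) (gradMat (cg G ℓ v) x)| ≤ C * ℓ ^ (h - 2) := by
  have hM : 0 ≤ kerConst G := kerConst_nonneg
  set S : ℝ := hb ^ 2 / (4 * m ^ 2) * (K * kerConst G)
    + hb ^ 2 / m ^ 2 * (K / (2 * Real.sqrt ρmin)) ^ 2 * ℓ₀ with hS
  have hS0 : 0 ≤ S := by positivity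
  refine ⟨d * (d * (S * (A * kerConst G))) + 1, by positivity, ?_⟩
  intro ρ v R Cv x hρ hmin _ hgrad hv hCv hinc ℓ hℓ
  have hℓ0 : 0 < ℓ := hℓ.1
  -- The bounded part of the stress is absorbed using `1 ≤ ℓ₀ / ℓ`.
  have hstress : ∀ i j, |cgStress G ℓ hb m ρ x i j| ≤ S * ℓ⁻¹ := fun i j => by
    refine (abs_cgStress_le hG hℓ0 hb m hρ hρmin hmin hgrad x i j).trans ?_
    have h1 : 1 ≤ ℓ₀ * ℓ⁻¹ := by
      rw [← div_eq_mul_inv]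
      exact (one_le_div hℓ0).2 hℓ.2
    have h2 := mul_le_mul_of_nonneg_left h1
      (by positivity : 0 ≤ hb ^ 2 / m ^ 2 * (K / (2 * Real.sqrt ρmin)) ^ 2)
    rw [hS]
    linarith
  have hstrain := abs_gradMat_cg_le hG hℓ0 hv hCv (hinc ℓ hℓ).1
  refine (abs_frobInner_le hstress hstrain).trans ?_
  have hpow : ℓ ^ (h - 2) = ℓ ^ h * (ℓ⁻¹ * ℓ⁻¹) := by
    rw [Real.rpow_sub hℓ0, Real.rpow_two]
    field_simp
  have hpos : 0 < ℓ ^ (h - 2) := Real.rpow_pos_of_pos hℓ0 _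
  calc (d : ℝ) * (d * (S * ℓ⁻¹ * (A * ℓ ^ h * (ℓ⁻¹ * kerConst G))))
      = d * (d * (S * (A * kerConst G))) * ℓ ^ (h - 2) := by rw [hpow]; ring
    _ ≤ (d * (d * (S * (A * kerConst G))) + 1) * ℓ ^ (h - 2) := by linarith
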